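/- arXiv:0911.2785 — 2 statements merged into one kernel-verified Lean document; each statement's English description precedes it below -/
import Mathlib

section
/- Let G = (N, E) be a finite simple graph and C a finite set of colors with |C| at least the chromatic number of G. In the ground min-coloring program over G and C (the k-coloring program together with the rule used_color(C) ← col(X,C)), the minimum over all stable models M of the cardinality of {c ∈ C : used_color(c) ∈ M} equals the chromatic number of G, i.e., the least number of colors in a proper coloring of G. Moreover, the colorings induced by the stable models achieving this minimum are exactly the proper colorings of G with colors in C using the minimum possible number of distinct colors. -/
/-- A ground normal logic program rule: head atom, positive body atoms, negated body atoms. -/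
structure Rule (α : Type*) where
  head : α
  pos : Set α
  neg : Set α

/-- A fact is a rule with empty body. -/
def Rule.fact {α : Type*} (a : α) : Rule α := ⟨a, ∅, ∅⟩

/-- `I` is closed under the Gelfond–Lifschitz reduct `P^M`: for every rule of `P` whose
negated body atoms are all outside `M`, if the positive body is contained in `I` then
so is the head. -/
def ClosedUnderReduct {α : Type*} (P : Set (Rule α)) (M I : Set α) : Prop :=
  ∀ r ∈ P, (∀ c ∈ r.neg, c ∉ M) → r.pos ⊆ I → r.head ∈ I

/-- Least model of the reduct `P^M`: the least set of atoms closed under its rules. -/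
def LeastReductModel {α : Type*} (P : Set (Rule α)) (M : Set α) : Set α :=
  ⋂₀ {I | ClosedUnderReduct P M I}

/-- `M` is a stable model of `P` if it equals the least model of the reduct `P^M`. -/
def IsStableModel {α : Type*} (P : Set (Rule α)) (M : Set α) : Prop :=
  M = LeastReductModel P M

/-- Atoms of the min-coloring program. -/
inductive MCAtom (V C : Type*) where
  | node : V → MCAtom V C
  | color : C → MCAtom V C
  | edge : V → V → MCAtom V C
  | col : V → C → MCAtom V C
  | diff : V → C → MCAtom V C
  | used : C → MCAtom V C
  | c0 : MCAtom V C

/-- The ground min-coloring program: the k-coloring program together with the rule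
`used_color(C) ← col(X,C)`. -/
def minColProgram {V C : Type*} (G : SimpleGraph V) : Set (Rule (MCAtom V C)) :=
  {r | ∃ x : V, r = Rule.fact (MCAtom.node x)} ∪
  {r | ∃ c : C, r = Rule.fact (MCAtom.color c)} ∪
  {r | ∃ x y : V, G.Adj x y ∧ r = Rule.fact (MCAtom.edge x y)} ∪
  {r | ∃ (x : V) (c : C), r = ⟨MCAtom.col x c, ∅, {MCAtom.diff x c}⟩} ∪
  {r | ∃ (x : V) (c c' : C), c' ≠ c ∧ r = ⟨MCAtom.diff x c, {MCAtom.col x c'}, ∅⟩} ∪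
  {r | ∃ (x y : V) (c : C),
      r = ⟨MCAtom.c0, {MCAtom.edge x y, MCAtom.col x c, MCAtom.col y c}, {MCAtom.c0}⟩} ∪
  {r | ∃ (x : V) (c : C), r = ⟨MCAtom.used c, {MCAtom.col x c}, ∅⟩}

/-!
A proper coloring `f` determines an interpretation, and that interpretation is a stable model.
Conversely, in a stable model `M` the atom `c₀` is false, because its only rules negate it, and
every node has a color, because a false `col x c` forces `diff x c`, which only another color of `x`
supports. A choice of colors from `M` is therefore proper, and its interpretation is contained in
`M`. Stable models form an antichain, so the two coincide. Hence stable models are the same thing as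
proper colorings, and their used colors are the range of the coloring.
-/

section StableModels

variable {α : Type*} {P : Set (Rule α)} {M N I : Set α}

theorem isLeast_leastReductModel :
    IsLeast {I | ClosedUnderReduct P M I} (LeastReductModel P M) :=
  ⟨fun r hr hneg hpos _ hI => hI r hr hneg (hpos.trans (Set.sInter_subset_of_mem hI)),
    fun _ hI => Set.sInter_subset_of_mem hI⟩

theorem isStableModel_iff_isLeast :
    IsStableModel P M ↔ IsLeast {I | ClosedUnderReduct P M I} M :=
  eq_comm.trans isLeast_leastReductModel.isLeast_iff_eq.symm

theorem IsStableModel.closedUnderReduct (hM : IsStableModel P M) : ClosedUnderReduct P M M :=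
  (isStableModel_iff_isLeast.mp hM).1

theorem IsStableModel.subset_of_closedUnderReduct (hM : IsStableModel P M)
    (hI : ClosedUnderReduct P M I) : M ⊆ I :=
  (isStableModel_iff_isLeast.mp hM).2 hI

theorem ClosedUnderReduct.mono_left (hI : ClosedUnderReduct P M I) (hMN : M ⊆ N) :
    ClosedUnderReduct P N I :=
  fun r hr hneg => hI r hr fun c hc hcM => hneg c hc (hMN hcM)

theorem IsStableModel.eq_of_subset (hM : IsStableModel P M) (hN : IsStableModel P N)
    (hMN : M ⊆ N) : M = N :=
  hMN.antisymm (hN.subset_of_closedUnderReduct (hM.closedUnderReduct.mono_left hMN))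

theorem IsStableModel.exists_supporting_rule (hM : IsStableModel P M) {a : α} (ha : a ∈ M) :
    ∃ r ∈ P, r.head = a ∧ (∀ c ∈ r.neg, c ∉ M) ∧ r.pos ⊆ M := by
  by_contra! hunsupported
  have hclosed : ClosedUnderReduct P M (M \ {a}) := by
    intro r hr hneg hpos
    have hposM : r.pos ⊆ M := hpos.trans Set.sdiff_subset
    exact ⟨hM.closedUnderReduct r hr hneg hposM, fun hhead => hunsupported r hr hhead hneg hposM⟩
  exact (hM.subset_of_closedUnderReduct hclosed ha).2 rfl

end StableModels

section MinColProgram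

variable {V C : Type*} {G : SimpleGraph V} {M I : Set (MCAtom V C)}

theorem closedUnderReduct_minColProgram_iff :
    ClosedUnderReduct (minColProgram G) M I ↔
      (∀ x, .node x ∈ I) ∧ (∀ c, .color c ∈ I) ∧
      (∀ x y, G.Adj x y → .edge x y ∈ I) ∧
      (∀ x c, .diff x c ∉ M → .col x c ∈ I) ∧
      (∀ x c c', c' ≠ c → .col x c' ∈ I → .diff x c ∈ I) ∧
      (∀ x y c, .c0 ∉ M → .edge x y ∈ I → .col x c ∈ I → .col y c ∈ I → .c0 ∈ I) ∧
      (∀ x c, .col x c ∈ I → .used c ∈ I) := by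
  -- `forall_comm` moves each rule next to the equation defining it, which `simp` then substitutes.
  simp [ClosedUnderReduct, minColProgram, Rule.fact, or_imp, forall_and, and_assoc,
    forall_comm (α := Rule (MCAtom V C)), Set.insert_subset_iff]

theorem IsStableModel.c0_notMem (hM : IsStableModel (minColProgram G) M) : .c0 ∉ M := by
  intro hc0
  simpa [minColProgram, Rule.fact, or_and_right, exists_or, hc0] using
    hM.exists_supporting_rule hc0

theorem IsStableModel.exists_ne_col_mem_of_diff_mem (hM : IsStableModel (minColProgram G) M)
    {x : V} {c : C} (hdiff : .diff x c ∈ M) : ∃ c' ≠ c, .col x c' ∈ M := by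
  simpa [minColProgram, Rule.fact, or_and_right, exists_or] using hM.exists_supporting_rule hdiff

theorem IsStableModel.exists_col_mem [Nonempty C] (hM : IsStableModel (minColProgram G) M)
    (x : V) : ∃ c, .col x c ∈ M := by
  obtain ⟨-, -, -, hcol, -⟩ := closedUnderReduct_minColProgram_iff.mp hM.closedUnderReduct
  by_cases hdiff : .diff x (Classical.arbitrary C) ∈ M
  · obtain ⟨c, -, hc⟩ := hM.exists_ne_col_mem_of_diff_mem hdiff
    exact ⟨c, hc⟩
  · exact ⟨_, hcol x _ hdiff⟩

theorem IsStableModel.ne_of_adj (hM : IsStableModel (minColProgram G) M) {x y : V} {c d : C}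
    (hadj : G.Adj x y) (hx : .col x c ∈ M) (hy : .col y d ∈ M) : c ≠ d := by
  rintro rfl
  obtain ⟨-, -, hedge, -, -, hc0, -⟩ :=
    closedUnderReduct_minColProgram_iff.mp hM.closedUnderReduct
  exact hM.c0_notMem (hc0 x y c hM.c0_notMem (hedge x y hadj) hx hy)

/-- The interpretation of the min-coloring program that a proper coloring induces; it is the stable
model corresponding to the coloring. -/
def coloringModel (f : G.Coloring C) : Set (MCAtom V C) :=
  {a | match a with
    | .node _ => True
    | .color _ => True
    | .edge x y => G.Adj x y
    | .col x c => f x = c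
    | .diff x c => f x ≠ c
    | .used c => c ∈ Set.range f
    | .c0 => False}

theorem closedUnderReduct_coloringModel (f : G.Coloring C) :
    ClosedUnderReduct (minColProgram G) (coloringModel f) (coloringModel f) := by
  refine closedUnderReduct_minColProgram_iff.mpr ⟨fun _ => trivial, fun _ => trivial,
    fun _ _ hadj => hadj, fun _ _ hcol => not_not.mp hcol, ?_, ?_, fun x _ hcol => ⟨x, hcol⟩⟩
  · rintro x c _ hne rfl
    exact hne
  · rintro x y c - hadj hx hy
    exact f.valid hadj (Eq.trans hx (Eq.symm hy))

theorem coloringModel_subset {f : G.Coloring C} (hI : ClosedUnderReduct (minColProgram G) M I)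
    (hf : ∀ x, .col x (f x) ∈ I) : coloringModel f ⊆ I := by
  obtain ⟨hnode, hcolor, hedge, -, hdiff, -, hused⟩ := closedUnderReduct_minColProgram_iff.mp hI
  rintro (x | c | ⟨x, y⟩ | ⟨x, c⟩ | ⟨x, c⟩ | c | _) ha
  · exact hnode x
  · exact hcolor c
  · exact hedge x y ha
  · obtain rfl : f x = c := ha
    exact hf x
  · exact hdiff x c (f x) ha (hf x)
  · obtain ⟨x, rfl⟩ : c ∈ Set.range f := ha
    exact hused x _ (hf x)
  · exact ha.elim

theorem isStableModel_coloringModel (f : G.Coloring C) :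
    IsStableModel (minColProgram G) (coloringModel f) := by
  refine isStableModel_iff_isLeast.mpr ⟨closedUnderReduct_coloringModel f, fun I hI => ?_⟩
  obtain ⟨-, -, -, hcol, -⟩ := closedUnderReduct_minColProgram_iff.mp hI
  exact coloringModel_subset hI fun x => hcol x (f x) (not_not.mpr rfl)

theorem isStableModel_minColProgram_iff [Nonempty (V → C)] :
    IsStableModel (minColProgram G) M ↔ ∃ f : G.Coloring C, coloringModel f = M := by
  refine ⟨fun hM => ?_, ?_⟩
  · have hexists (x : V) : ∃ c, .col x c ∈ M :=
      have : Nonempty C := ⟨Classical.arbitrary (V → C) x⟩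
      hM.exists_col_mem x
    choose f hf using hexists
    let g : G.Coloring C := .mk f fun hadj => hM.ne_of_adj hadj (hf _) (hf _)
    exact ⟨g, (isStableModel_coloringModel g).eq_of_subset hM
      (coloringModel_subset hM.closedUnderReduct hf)⟩
  · rintro ⟨f, rfl⟩
    exact isStableModel_coloringModel f

theorem setOf_used_mem_coloringModel (f : G.Coloring C) :
    {c | .used c ∈ coloringModel f} = Set.range f := rfl

end MinColProgram

section ChromaticNumber

variable {V C : Type*} {G : SimpleGraph V}

theorem chromaticNumber_le_encard_range (f : G.Coloring C) :
    G.chromaticNumber ≤ (Set.range f).encard := by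
  rcases (Set.range f).finite_or_infinite with hfin | hinf
  · have := hfin.fintype
    let g : G.Coloring (Set.range f) :=
      .mk (Set.rangeFactorization f) fun hadj h => f.valid hadj (congrArg Subtype.val h)
    exact g.colorable.chromaticNumber_le.trans_eq (Set.coe_fintypeCard _)
  · simp [hinf.encard_eq]

theorem exists_coloring_encard_range_eq_chromaticNumber (hC : Nonempty (G.Coloring C)) :
    ∃ f : G.Coloring C, (Set.range f).encard = G.chromaticNumber := by
  obtain ⟨f⟩ := hC
  rcases eq_or_ne G.chromaticNumber ⊤ with htop | hne_top
  · exact ⟨f, (top_le_iff.mp (htop ▸ chromaticNumber_le_encard_range f)).trans htop.symm⟩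
  obtain ⟨t, -, ht⟩ := Set.exists_subset_encard_eq (chromaticNumber_le_encard_range f)
  have := (Set.encard_ne_top_iff.mp (ht ▸ hne_top)).fintype
  have hcolorable : G.Colorable (Fintype.card t) := by
    rw [← SimpleGraph.chromaticNumber_le_iff_colorable, Set.coe_fintypeCard, ht]
  let g : G.Coloring C :=
    G.recolorOfEmbedding (.subtype (· ∈ t)) (hcolorable.toColoring le_rfl)
  have hrange : Set.range g ⊆ t := Set.range_subset_iff.mpr fun _ => Subtype.property _
  exact ⟨g, (ht ▸ Set.encard_le_encard hrange).antisymm (chromaticNumber_le_encard_range g)⟩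

end ChromaticNumber

theorem stmt7_general {V C : Type*} (G : SimpleGraph V) (hC : Nonempty (G.Coloring C)) :
    IsLeast {k : ℕ∞ | ∃ M : Set (MCAtom V C), IsStableModel (minColProgram G) M ∧
        {c : C | MCAtom.used c ∈ M}.encard = k}
      G.chromaticNumber ∧
    (∀ f : V → C,
      (∃ M : Set (MCAtom V C), IsStableModel (minColProgram G) M ∧
          {c : C | MCAtom.used c ∈ M}.encard = G.chromaticNumber ∧
          ∀ x : V, MCAtom.col x (f x) ∈ M) ↔
      ((∀ x y : V, G.Adj x y → f x ≠ f y) ∧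
        (Set.range f).encard = G.chromaticNumber)) := by
  have : Nonempty (V → C) := hC.map (⇑)
  refine ⟨⟨?_, ?_⟩, fun f => ⟨?_, ?_⟩⟩
  · obtain ⟨f, hf⟩ := exists_coloring_encard_range_eq_chromaticNumber hC
    exact ⟨coloringModel f, isStableModel_coloringModel f, by rw [setOf_used_mem_coloringModel, hf]⟩
  · rintro _ ⟨M, hM, rfl⟩
    obtain ⟨f, rfl⟩ := isStableModel_minColProgram_iff.mp hM
    rw [setOf_used_mem_coloringModel]
    exact chromaticNumber_le_encard_range f
  · rintro ⟨M, hM, hcard, hcol⟩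
    obtain ⟨g, rfl⟩ := isStableModel_minColProgram_iff.mp hM
    obtain rfl : ⇑g = f := funext hcol
    exact ⟨fun _ _ => g.valid, by rwa [setOf_used_mem_coloringModel] at hcard⟩
  · rintro ⟨hproper, hcard⟩
    let g : G.Coloring C := .mk f fun {x y} => hproper x y
    exact ⟨coloringModel g, isStableModel_coloringModel g,
      by rwa [setOf_used_mem_coloringModel], fun _ => rfl⟩

theorem stmt7 {V C : Type*} [Fintype V] [Fintype C] [Nonempty C] (G : SimpleGraph V)
    (hC : G.Colorable (Fintype.card C)) :
    IsLeast {k : ℕ | ∃ M : Set (MCAtom V C), IsStableModel (minColProgram G) M ∧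
        {c : C | MCAtom.used c ∈ M}.ncard = k}
      (sInf {n : ℕ | G.Colorable n}) ∧
    (∀ f : V → C,
      (∃ M : Set (MCAtom V C), IsStableModel (minColProgram G) M ∧
          {c : C | MCAtom.used c ∈ M}.ncard = sInf {n : ℕ | G.Colorable n} ∧
          ∀ x : V, MCAtom.col x (f x) ∈ M) ↔
      ((∀ x y : V, G.Adj x y → f x ≠ f y) ∧
        (Set.range f).ncard = sInf {n : ℕ | G.Colorable n})) := by
  have hencard (s : Set C) : s.encard = s.ncard := s.toFinite.cast_ncard_eq.symm
  simpa only [IsLeast, mem_lowerBounds, Set.mem_ofPred_eq, forall_exists_index, and_imp,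
    forall_apply_eq_imp_iff₂, hC.chromaticNumber_eq_sInf, hencard, Nat.cast_inj, Nat.cast_le]
    using stmt7_general G ⟨hC.toColoring (α := C) le_rfl⟩
end

section
/- Let N ≥ 1 and let a partial filling be given by a set Pre ⊆ {1,…,N}³ of triples (r,c,v) (entry (r,c) pre-filled with symbol v), with at most one triple per entry (r,c). Let P_ls(N,Pre) be the ground normal logic program consisting of the facts num(1),…,num(N) and preassigned(r,c,v) for (r,c,v) ∈ Pre, together with the standard translation of: the generalized partition rule ⊕_V square(R,C,V) ← num(R), num(C), num(V), the constraints ⇐ square(R,C₁,V), square(R,C₂,V), C₁ ≠ C₂ and ⇐ square(R₁,C,V), square(R₂,C,V), R₁ ≠ R₂, and the constraint square(R,C,V) ⇐ preassigned(R,C,V) (each constraint translated as c₀ ← Body, ¬c₀). Then the stable models of P_ls(N,Pre) are in bijection with the functions sq : {1,…,N} × {1,…,N} → {1,…,N} such that sq(r,c₁) ≠ sq(r,c₂) for c₁ ≠ c₂, sq(r₁,c) ≠ sq(r₂,c) for r₁ ≠ r₂, and sq(r,c) = v for every (r,c,v) ∈ Pre; i.e., with the Latin squares of order N extending the partial filling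 Pre. In particular, P_ls(N,Pre) has a stable model if and only if Pre can be completed to a Latin square of order N. -/
/-- Atoms of the Latin-squares program (`c1`, `c2`, `c3` are the fresh constraint atoms). -/
inductive LAtom where
  | num : ℕ → LAtom
  | preassigned : ℕ → ℕ → ℕ → LAtom
  | square : ℕ → ℕ → ℕ → LAtom
  | diff : ℕ → ℕ → ℕ → LAtom
  | c1 : LAtom
  | c2 : LAtom
  | c3 : LAtom

/-- The ground program `P_ls(N,Pre)`: facts, the translated generalized partition rule
`⊕_V square(R,C,V) ← num(R), num(C), num(V)` and the three translated constraints. -/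
def lsProgram (N : ℕ) (Pre : Finset (ℕ × ℕ × ℕ)) : Set (Rule LAtom) :=
  {r | ∃ n ∈ Finset.Icc 1 N, r = Rule.fact (LAtom.num n)} ∪
  {r | ∃ p ∈ Pre, r = Rule.fact (LAtom.preassigned p.1 p.2.1 p.2.2)} ∪
  {r | ∃ x ∈ Finset.Icc 1 N, ∃ c ∈ Finset.Icc 1 N, ∃ v ∈ Finset.Icc 1 N,
      r = ⟨LAtom.square x c v, ∅, {LAtom.diff x c v}⟩} ∪
  {r | ∃ x ∈ Finset.Icc 1 N, ∃ c ∈ Finset.Icc 1 N, ∃ v ∈ Finset.Icc 1 N,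
      ∃ v' ∈ Finset.Icc 1 N, v' ≠ v ∧
      r = ⟨LAtom.diff x c v, {LAtom.square x c v'}, ∅⟩} ∪
  {r | ∃ x ∈ Finset.Icc 1 N, ∃ c1 ∈ Finset.Icc 1 N, ∃ c2 ∈ Finset.Icc 1 N,
      ∃ v ∈ Finset.Icc 1 N, c1 ≠ c2 ∧
      r = ⟨LAtom.c1, {LAtom.square x c1 v, LAtom.square x c2 v}, {LAtom.c1}⟩} ∪
  {r | ∃ r1 ∈ Finset.Icc 1 N, ∃ r2 ∈ Finset.Icc 1 N, ∃ c ∈ Finset.Icc 1 N,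
      ∃ v ∈ Finset.Icc 1 N, r1 ≠ r2 ∧
      r = ⟨LAtom.c2, {LAtom.square r1 c v, LAtom.square r2 c v}, {LAtom.c2}⟩} ∪
  {r | ∃ x ∈ Finset.Icc 1 N, ∃ c ∈ Finset.Icc 1 N, ∃ v ∈ Finset.Icc 1 N,
      r = ⟨LAtom.c3, {LAtom.preassigned x c v}, {LAtom.square x c v, LAtom.c3}⟩}

/-!
A rule `c ← Body, ¬c` derives nothing in a stable model, so adding such rules to a program keeps
exactly the stable models in which no `Body, ¬c` holds. Without its constraints, `P_ls(N,Pre)`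
consists of facts and one partition rule. In a stable model of these, `square(r,c,v)` holds iff
`diff(r,c,v)` fails, and `diff(r,c,v)` holds iff `square(r,c,v')` holds for some `v' ≠ v`; hence
each entry carries exactly one symbol, and the stable models are the arbitrary fillings of the
table. The constraints then select the Latin squares that extend `Pre`.
-/

section StableModel

variable {α : Type*} {P Q : Set (Rule α)} {M I : Set α}

/-- Truth of the whole body of a rule in the interpretation `M`. -/
def Rule.BodyHolds (r : Rule α) (M : Set α) : Prop :=
  r.pos ⊆ M ∧ ∀ c ∈ r.neg, c ∉ M

theorem LeastReductModel.subset_of_closed (h : ClosedUnderReduct P M I) :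
    LeastReductModel P M ⊆ I :=
  Set.sInter_subset_of_mem h

theorem LeastReductModel.closed (P : Set (Rule α)) (M : Set α) :
    ClosedUnderReduct P M (LeastReductModel P M) := fun r hr hneg hpos _ hI =>
  hI r hr hneg (hpos.trans (subset_of_closed hI))

theorem isStableModel_iff :
    IsStableModel P M ↔ ClosedUnderReduct P M M ∧ ∀ I, ClosedUnderReduct P M I → M ⊆ I := by
  refine ⟨fun h => ⟨?_, fun I hI => ?_⟩, fun ⟨hM, hmin⟩ => ?_⟩
  · have hclosed := LeastReductModel.closed P M
    rwa [← h] at hclosed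
  · exact h.trans_subset (LeastReductModel.subset_of_closed hI)
  · exact (Set.subset_sInter hmin).antisymm (LeastReductModel.subset_of_closed hM)

theorem closedUnderReduct_union :
    ClosedUnderReduct (P ∪ Q) M I ↔ ClosedUnderReduct P M I ∧ ClosedUnderReduct Q M I := by
  simp only [ClosedUnderReduct, Set.mem_union, or_imp, forall_and]

theorem IsStableModel.mem_iff (h : IsStableModel P M) {a : α} :
    a ∈ M ↔ ∃ r ∈ P, r.head = a ∧ r.BodyHolds M := by
  obtain ⟨hclosed, hmin⟩ := isStableModel_iff.1 h
  refine ⟨fun ha => ?_, ?_⟩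
  · by_contra hunsupported
    have hdiff : ClosedUnderReduct P M (M \ {a}) := fun r hr hneg hpos =>
      have hposM := hpos.trans Set.sdiff_subset
      ⟨hclosed r hr hneg hposM, fun hra => hunsupported ⟨r, hr, hra, hposM, hneg⟩⟩
    exact (hmin _ hdiff ha).2 rfl
  · rintro ⟨r, hr, rfl, hpos, hneg⟩
    exact hclosed r hr hneg hpos

theorem isStableModel_union_iff_of_head_mem_neg (hQ : ∀ r ∈ Q, r.head ∈ r.neg) :
    IsStableModel (P ∪ Q) M ↔ IsStableModel P M ∧ ∀ r ∈ Q, ¬ r.BodyHolds M := by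
  simp only [isStableModel_iff, closedUnderReduct_union]
  constructor
  · rintro ⟨⟨hP, hQM⟩, hmin⟩
    have hviolated : ∀ r ∈ Q, ¬ r.BodyHolds M := fun r hr ⟨hpos, hneg⟩ =>
      hneg _ (hQ r hr) (hQM r hr hneg hpos)
    refine ⟨⟨hP, fun I hI => ?_⟩, hviolated⟩
    have hinter : ClosedUnderReduct P M (M ∩ I) := fun r hr hneg hpos =>
      ⟨hP r hr hneg (hpos.trans Set.inter_subset_left),
        hI r hr hneg (hpos.trans Set.inter_subset_right)⟩
    refine (hmin (M ∩ I) ⟨hinter, fun r hr hneg hpos => ?_⟩).trans Set.inter_subset_right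
    exact absurd ⟨hpos.trans Set.inter_subset_left, hneg⟩ (hviolated r hr)
  · rintro ⟨⟨hP, hmin⟩, hviolated⟩
    exact ⟨⟨hP, fun r hr hneg hpos => absurd ⟨hpos, hneg⟩ (hviolated r hr)⟩,
      fun I hI => hmin I hI.1⟩

end StableModel

section Partition

variable {α κ ν : Type*} {F M I : Set α} {val diff : κ → ν → α}

/-- The facts `F` together with the translation of a generalized partition rule `⊕_v val k v`,
which is to give every `k : κ` exactly one value `v : ν`. -/
def partitionProgram (F : Set α) (val diff : κ → ν → α) : Set (Rule α) :=
  {r | ∃ a ∈ F, r = Rule.fact a} ∪ {r | ∃ k v, r = ⟨val k v, ∅, {diff k v}⟩} ∪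
    {r | ∃ k v v', v' ≠ v ∧ r = ⟨diff k v, {val k v'}, ∅⟩}

/-- The interpretation over the facts `F` that encodes the choice function `f` of a generalized
partition rule. -/
def partitionModel (F : Set α) (val diff : κ → ν → α) (f : κ → ν) : Set α :=
  F ∪ {a | ∃ k, a = val k (f k)} ∪ {a | ∃ k v, v ≠ f k ∧ a = diff k v}

/-- The condition that the atoms `val k v`, `diff k v` and those in `F` are pairwise distinct, as
the ground atoms of a program with facts `F` and a generalized partition rule are. -/
structure IsPartitionVocabulary (F : Set α) (val diff : κ → ν → α) : Prop where
  val_injective : Function.Injective2 val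
  diff_injective : Function.Injective2 diff
  val_ne_diff : ∀ k v k' v', val k v ≠ diff k' v'
  val_notMem : ∀ k v, val k v ∉ F
  diff_notMem : ∀ k v, diff k v ∉ F

theorem closedUnderReduct_partitionProgram_iff :
    ClosedUnderReduct (partitionProgram F val diff) M I ↔
      F ⊆ I ∧ (∀ k v, diff k v ∉ M → val k v ∈ I) ∧
        ∀ k v v', v' ≠ v → val k v' ∈ I → diff k v ∈ I := by
  constructor
  · refine fun h => ⟨fun a ha => ?_, fun k v hd => ?_, fun k v v' hne hv' => ?_⟩
    · exact h _ (.inl (.inl ⟨a, ha, rfl⟩)) (by simp [Rule.fact]) (by simp [Rule.fact])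
    · exact h _ (.inl (.inr ⟨k, v, rfl⟩)) (by simpa using hd) (by simp)
    · exact h _ (.inr ⟨k, v, v', hne, rfl⟩) (by simp) (by simpa using hv')
  · rintro ⟨hF, hval, hdiff⟩ r ((⟨a, ha, rfl⟩ | ⟨k, v, rfl⟩) | ⟨k, v, v', hne, rfl⟩) hneg hpos
    · exact hF ha
    · exact hval k v (hneg _ rfl)
    · exact hdiff k v v' hne (hpos rfl)

theorem IsStableModel.mem_iff_partitionProgram
    (h : IsStableModel (partitionProgram F val diff) M) {a : α} :
    a ∈ M ↔ a ∈ F ∨ (∃ k v, a = val k v ∧ diff k v ∉ M) ∨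
      ∃ k v, a = diff k v ∧ ∃ v', v' ≠ v ∧ val k v' ∈ M := by
  refine ⟨fun ha => ?_, ?_⟩
  · obtain ⟨r, (⟨a, haF, rfl⟩ | ⟨k, v, rfl⟩) | ⟨k, v, v', hne, rfl⟩, rfl, hpos, hneg⟩ :=
      h.mem_iff.1 ha
    · exact .inl haF
    · exact .inr (.inl ⟨k, v, rfl, hneg _ rfl⟩)
    · exact .inr (.inr ⟨k, v, rfl, v', hne, hpos rfl⟩)
  · obtain ⟨hF, hval, hdiff⟩ :=
      closedUnderReduct_partitionProgram_iff.1 (isStableModel_iff.1 h).1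
    rintro (ha | ⟨k, v, rfl, hd⟩ | ⟨k, v, rfl, v', hne, hv'⟩)
    · exact hF ha
    · exact hval k v hd
    · exact hdiff k v v' hne hv'

namespace IsPartitionVocabulary

theorem val_mem_iff (hV : IsPartitionVocabulary F val diff)
    (h : IsStableModel (partitionProgram F val diff) M) {k : κ} {v : ν} :
    val k v ∈ M ↔ diff k v ∉ M := by
  simp [h.mem_iff_partitionProgram (a := val k v), hV.val_notMem, hV.val_ne_diff,
    hV.val_injective.eq_iff]

theorem diff_mem_iff (hV : IsPartitionVocabulary F val diff)
    (h : IsStableModel (partitionProgram F val diff) M) {k : κ} {v : ν} :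
    diff k v ∈ M ↔ ∃ v', v' ≠ v ∧ val k v' ∈ M := by
  simp [h.mem_iff_partitionProgram (a := diff k v), hV.diff_notMem,
    fun k v k' v' => (hV.val_ne_diff k v k' v').symm, hV.diff_injective.eq_iff]

theorem existsUnique_val_mem [Nonempty ν] (hV : IsPartitionVocabulary F val diff)
    (h : IsStableModel (partitionProgram F val diff) M) (k : κ) : ∃! v, val k v ∈ M := by
  obtain ⟨v, hv⟩ : ∃ v, val k v ∈ M := by
    by_contra! hnone
    have hdiff : diff k (Classical.arbitrary ν) ∈ M :=
      not_not.1 fun hd => hnone _ ((hV.val_mem_iff h).2 hd)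
    obtain ⟨v, -, hv⟩ := (hV.diff_mem_iff h).1 hdiff
    exact hnone v hv
  refine ⟨v, hv, fun w hw => ?_⟩
  by_contra hne
  exact (hV.val_mem_iff h).1 hw ((hV.diff_mem_iff h).2 ⟨v, Ne.symm hne, hv⟩)

theorem val_mem_partitionModel (hV : IsPartitionVocabulary F val diff) {f : κ → ν} {k : κ}
    {v : ν} : val k v ∈ partitionModel F val diff f ↔ v = f k := by
  simp [partitionModel, hV.val_notMem, hV.val_ne_diff, hV.val_injective.eq_iff]

theorem diff_mem_partitionModel (hV : IsPartitionVocabulary F val diff) {f : κ → ν} {k : κ}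
    {v : ν} : diff k v ∈ partitionModel F val diff f ↔ v ≠ f k := by
  simp [partitionModel, hV.diff_notMem, fun k v k' v' => (hV.val_ne_diff k v k' v').symm,
    hV.diff_injective.eq_iff]

theorem isStableModel_partitionModel (hV : IsPartitionVocabulary F val diff) (f : κ → ν) :
    IsStableModel (partitionProgram F val diff) (partitionModel F val diff f) := by
  simp only [isStableModel_iff, closedUnderReduct_partitionProgram_iff,
    hV.val_mem_partitionModel, hV.diff_mem_partitionModel, not_not]
  refine ⟨⟨fun a ha => .inl (.inl ha), fun _ _ => id, ?_⟩, ?_⟩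
  · rintro k v _ hne rfl
    exact hne.symm
  · rintro I ⟨hF, hval, hdiff⟩ _ ((ha | ⟨k, rfl⟩) | ⟨k, v, hne, rfl⟩)
    · exact hF ha
    · exact hval k _ rfl
    · exact hdiff k v _ hne.symm (hval k _ rfl)

theorem isStableModel_iff_exists_partitionModel (hV : IsPartitionVocabulary F val diff)
    (hν : κ → Nonempty ν) :
    IsStableModel (partitionProgram F val diff) M ↔ ∃ f, M = partitionModel F val diff f := by
  refine ⟨fun h => ?_, ?_⟩
  · choose f hf hunique using fun k => have := hν k; hV.existsUnique_val_mem h k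
    have hval {k v} : val k v ∈ M ↔ v = f k := ⟨hunique k v, fun hv => hv ▸ hf k⟩
    have hdiff {k v} : diff k v ∈ M ↔ v ≠ f k := by
      rw [ne_eq, ← hval, hV.val_mem_iff h, not_not]
    refine ⟨f, Set.ext fun a => ?_⟩
    rw [h.mem_iff_partitionProgram]
    simp only [← hV.val_mem_iff h, ← hV.diff_mem_iff h]
    simp [hval, hdiff, partitionModel, or_assoc, and_comm]
  · rintro ⟨f, rfl⟩
    exact hV.isStableModel_partitionModel f

end IsPartitionVocabulary

end Partition

section LatinSquare

variable {N : ℕ} {Pre : Finset (ℕ × ℕ × ℕ)}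
  {sq : Finset.Icc 1 N → Finset.Icc 1 N → Finset.Icc 1 N}

/-- `sq` is a Latin square of order `N` that extends `Pre`. Triples of `Pre` whose row or column
lies outside the table impose no condition. -/
def IsLatinCompletion (Pre : Finset (ℕ × ℕ × ℕ))
    (sq : Finset.Icc 1 N → Finset.Icc 1 N → Finset.Icc 1 N) : Prop :=
  (∀ r c1 c2, c1 ≠ c2 → sq r c1 ≠ sq r c2) ∧
  (∀ r1 r2 c, r1 ≠ r2 → sq r1 c ≠ sq r2 c) ∧
  ∀ p ∈ Pre, ∀ (hr : p.1 ∈ Finset.Icc 1 N) (hc : p.2.1 ∈ Finset.Icc 1 N),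
    (sq ⟨p.1, hr⟩ ⟨p.2.1, hc⟩ : ℕ) = p.2.2

/-- The atoms stated as facts in `P_ls(N,Pre)`. -/
def lsFacts (N : ℕ) (Pre : Finset (ℕ × ℕ × ℕ)) : Set LAtom :=
  {a | ∃ n ∈ Finset.Icc 1 N, a = LAtom.num n} ∪
  {a | ∃ p ∈ Pre, a = LAtom.preassigned p.1 p.2.1 p.2.2}

/-- The atom `square(r,c,v)` for an entry `(r,c)` of the table and a symbol `v`. -/
def squareAtom (k : Finset.Icc 1 N × Finset.Icc 1 N) (v : Finset.Icc 1 N) : LAtom :=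
  .square k.1 k.2 v

/-- The atom `diff(r,c,v)` for an entry `(r,c)` of the table and a symbol `v`. -/
def diffAtom (k : Finset.Icc 1 N × Finset.Icc 1 N) (v : Finset.Icc 1 N) : LAtom :=
  .diff k.1 k.2 v

/-- The translated row and column constraints of `P_ls(N,Pre)` and its translated constraint
`square(R,C,V) ⇐ preassigned(R,C,V)`. -/
def lsConstraints (N : ℕ) : Set (Rule LAtom) :=
  {q | ∃ r c1 c2 v : Finset.Icc 1 N, c1 ≠ c2 ∧
    q = ⟨.c1, {squareAtom (r, c1) v, squareAtom (r, c2) v}, {.c1}⟩} ∪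
  {q | ∃ r1 r2 c v : Finset.Icc 1 N, r1 ≠ r2 ∧
    q = ⟨.c2, {squareAtom (r1, c) v, squareAtom (r2, c) v}, {.c2}⟩} ∪
  {q | ∃ r c v : Finset.Icc 1 N,
    q = ⟨.c3, {.preassigned r c v}, {squareAtom (r, c) v, .c3}⟩}

/-- The interpretation of the atoms of `P_ls(N,Pre)` that encodes the filling `sq`. -/
def lsModel (Pre : Finset (ℕ × ℕ × ℕ))
    (sq : Finset.Icc 1 N → Finset.Icc 1 N → Finset.Icc 1 N) : Set LAtom :=
  partitionModel (lsFacts N Pre) squareAtom diffAtom (Function.uncurry sq)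

theorem lsProgram_eq (N : ℕ) (Pre : Finset (ℕ × ℕ × ℕ)) :
    lsProgram N Pre =
      partitionProgram (lsFacts N Pre) (squareAtom (N := N)) diffAtom ∪ lsConstraints N := by
  ext q
  simp only [lsProgram, partitionProgram, lsFacts, lsConstraints, squareAtom, diffAtom,
    Set.mem_union, Set.mem_ofPred_eq, Prod.exists, Subtype.exists, exists_prop, ne_eq,
    Subtype.mk.injEq, or_and_right, exists_or, or_assoc]
  simp

theorem lsModel_eq (Pre : Finset (ℕ × ℕ × ℕ))
    (sq : Finset.Icc 1 N → Finset.Icc 1 N → Finset.Icc 1 N) :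
    lsModel Pre sq =
      {a | ∃ n ∈ Finset.Icc 1 N, a = LAtom.num n} ∪
      {a | ∃ p ∈ Pre, a = LAtom.preassigned p.1 p.2.1 p.2.2} ∪
      {a | ∃ r c : Finset.Icc 1 N, a = LAtom.square (r : ℕ) (c : ℕ) (sq r c : ℕ)} ∪
      {a | ∃ (r c : Finset.Icc 1 N) (v : ℕ), v ∈ Finset.Icc 1 N ∧
        v ≠ (sq r c : ℕ) ∧ a = LAtom.diff (r : ℕ) (c : ℕ) v} := by
  ext a
  simp only [lsModel, partitionModel, lsFacts, squareAtom, diffAtom, Set.mem_union,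
    Set.mem_ofPred_eq, Prod.exists, Function.uncurry_apply_pair, Subtype.exists, ne_eq,
    Subtype.ext_iff, exists_prop]

theorem isPartitionVocabulary_lsFacts (N : ℕ) (Pre : Finset (ℕ × ℕ × ℕ)) :
    IsPartitionVocabulary (lsFacts N Pre) (squareAtom (N := N)) diffAtom where
  val_injective _ _ _ _ h := by
    simpa only [squareAtom, LAtom.square.injEq, Prod.ext_iff, SetLike.coe_eq_coe, and_assoc] using h
  diff_injective _ _ _ _ h := by
    simpa only [diffAtom, LAtom.diff.injEq, Prod.ext_iff, SetLike.coe_eq_coe, and_assoc] using h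
  val_ne_diff _ _ _ _ := by simp [squareAtom, diffAtom]
  val_notMem _ _ := by simp [lsFacts, squareAtom]
  diff_notMem _ _ := by simp [lsFacts, diffAtom]

theorem squareAtom_mem_lsModel {r c v : Finset.Icc 1 N} :
    squareAtom (r, c) v ∈ lsModel Pre sq ↔ v = sq r c :=
  (isPartitionVocabulary_lsFacts N Pre).val_mem_partitionModel

theorem preassigned_mem_lsModel {r c v : ℕ} :
    LAtom.preassigned r c v ∈ lsModel Pre sq ↔ (r, c, v) ∈ Pre := by
  simp [lsModel_eq]

theorem head_mem_neg_of_mem_lsConstraints {q : Rule LAtom} (hq : q ∈ lsConstraints N) :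
    q.head ∈ q.neg := by
  rcases hq with (⟨r, c1, c2, v, -, rfl⟩ | ⟨r1, r2, c, v, -, rfl⟩) | ⟨r, c, v, rfl⟩ <;> simp

theorem forall_lsConstraints_not_bodyHolds_iff (hPre : ∀ p ∈ Pre, p.2.2 ∈ Finset.Icc 1 N) :
    (∀ q ∈ lsConstraints N, ¬ q.BodyHolds (lsModel Pre sq)) ↔ IsLatinCompletion Pre sq := by
  have hfresh : LAtom.c1 ∉ lsModel Pre sq ∧ LAtom.c2 ∉ lsModel Pre sq ∧
      LAtom.c3 ∉ lsModel Pre sq := by simp [lsModel_eq]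
  constructor
  · refine fun h => ⟨fun r c1 c2 hne heq => ?_, fun r1 r2 c hne heq => ?_, fun p hp hr hc => ?_⟩
    · exact h _ (.inl (.inl ⟨r, c1, c2, sq r c1, hne, rfl⟩))
        (by simp [Rule.BodyHolds, Set.insert_subset_iff, squareAtom_mem_lsModel, heq, hfresh])
    · exact h _ (.inl (.inr ⟨r1, r2, c, sq r1 c, hne, rfl⟩))
        (by simp [Rule.BodyHolds, Set.insert_subset_iff, squareAtom_mem_lsModel, heq, hfresh])
    · by_contra hne
      exact h _ (.inr ⟨⟨p.1, hr⟩, ⟨p.2.1, hc⟩, ⟨p.2.2, hPre p hp⟩, rfl⟩)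
        (by simp [Rule.BodyHolds, squareAtom_mem_lsModel, preassigned_mem_lsModel, hp, hfresh,
          Subtype.ext_iff, Ne.symm hne])
  · rintro ⟨hrow, hcol, hext⟩ q
      ((⟨r, c1, c2, v, hne, rfl⟩ | ⟨r1, r2, c, v, hne, rfl⟩) | ⟨r, c, v, rfl⟩) ⟨hpos, hneg⟩
    · have hv1 : v = sq r c1 := squareAtom_mem_lsModel.1 (hpos (.inl rfl))
      have hv2 : v = sq r c2 := squareAtom_mem_lsModel.1 (hpos (.inr rfl))
      exact hrow r c1 c2 hne (hv1.symm.trans hv2)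
    · have hv1 : v = sq r1 c := squareAtom_mem_lsModel.1 (hpos (.inl rfl))
      have hv2 : v = sq r2 c := squareAtom_mem_lsModel.1 (hpos (.inr rfl))
      exact hcol r1 r2 c hne (hv1.symm.trans hv2)
    · have hv : v = sq r c :=
        Subtype.ext (hext _ (preassigned_mem_lsModel.1 (hpos rfl)) r.2 c.2).symm
      exact hneg _ (.inl rfl) (squareAtom_mem_lsModel.2 hv)

theorem isStableModel_partitionProgram_lsFacts_iff {M : Set LAtom} :
    IsStableModel (partitionProgram (lsFacts N Pre) (squareAtom (N := N)) diffAtom) M ↔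
      ∃ sq : Finset.Icc 1 N → Finset.Icc 1 N → Finset.Icc 1 N, M = lsModel Pre sq :=
  ((isPartitionVocabulary_lsFacts N Pre).isStableModel_iff_exists_partitionModel
    fun k => ⟨k.1⟩).trans ((Equiv.curry _ _ _).exists_congr_left)

theorem isStableModel_lsProgram_iff (hPre : ∀ p ∈ Pre, p.2.2 ∈ Finset.Icc 1 N) {M : Set LAtom} :
    IsStableModel (lsProgram N Pre) M ↔
      ∃ sq : Finset.Icc 1 N → Finset.Icc 1 N → Finset.Icc 1 N,
        IsLatinCompletion Pre sq ∧ M = lsModel Pre sq := by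
  rw [lsProgram_eq, isStableModel_union_iff_of_head_mem_neg fun _ =>
      head_mem_neg_of_mem_lsConstraints, isStableModel_partitionProgram_lsFacts_iff]
  constructor
  · rintro ⟨⟨sq, rfl⟩, hconstraints⟩
    exact ⟨sq, (forall_lsConstraints_not_bodyHolds_iff hPre).1 hconstraints, rfl⟩
  · rintro ⟨sq, hsq, rfl⟩
    exact ⟨⟨sq, rfl⟩, (forall_lsConstraints_not_bodyHolds_iff hPre).2 hsq⟩

theorem stmt12_general (hPre : ∀ p ∈ Pre, p.2.2 ∈ Finset.Icc 1 N) :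
    (∀ M, IsStableModel (lsProgram N Pre) M ↔
      ∃ sq : Finset.Icc 1 N → Finset.Icc 1 N → Finset.Icc 1 N,
        IsLatinCompletion Pre sq ∧ M = lsModel Pre sq) ∧
    ((∃ M, IsStableModel (lsProgram N Pre) M) ↔
      ∃ sq : Finset.Icc 1 N → Finset.Icc 1 N → Finset.Icc 1 N, IsLatinCompletion Pre sq) := by
  refine ⟨fun M => isStableModel_lsProgram_iff hPre, ?_⟩
  simp only [isStableModel_lsProgram_iff hPre]
  rw [exists_comm]
  simp only [exists_and_left, exists_eq, and_true]

end LatinSquare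

theorem stmt12 (N : ℕ) (hN : 1 ≤ N) (Pre : Finset (ℕ × ℕ × ℕ))
    (hPre : ∀ p ∈ Pre, p.1 ∈ Finset.Icc 1 N ∧ p.2.1 ∈ Finset.Icc 1 N ∧ p.2.2 ∈ Finset.Icc 1 N)
    (hPre1 : ∀ p ∈ Pre, ∀ q ∈ Pre, p.1 = q.1 → p.2.1 = q.2.1 → p = q) :
    (∀ M : Set LAtom, IsStableModel (lsProgram N Pre) M ↔
      ∃ sq : {n : ℕ // n ∈ Finset.Icc 1 N} → {n : ℕ // n ∈ Finset.Icc 1 N} →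
          {n : ℕ // n ∈ Finset.Icc 1 N},
        (∀ r c1 c2, c1 ≠ c2 → sq r c1 ≠ sq r c2) ∧
        (∀ r1 r2 c, r1 ≠ r2 → sq r1 c ≠ sq r2 c) ∧
        (∀ p ∈ Pre, ∀ (hr : p.1 ∈ Finset.Icc 1 N) (hc : p.2.1 ∈ Finset.Icc 1 N),
          (sq ⟨p.1, hr⟩ ⟨p.2.1, hc⟩ : ℕ) = p.2.2) ∧
        M = {a | ∃ n ∈ Finset.Icc 1 N, a = LAtom.num n} ∪
            {a | ∃ p ∈ Pre, a = LAtom.preassigned p.1 p.2.1 p.2.2} ∪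
            {a | ∃ r c : {n : ℕ // n ∈ Finset.Icc 1 N},
                a = LAtom.square (r : ℕ) (c : ℕ) (sq r c : ℕ)} ∪
            {a | ∃ (r c : {n : ℕ // n ∈ Finset.Icc 1 N}) (v : ℕ), v ∈ Finset.Icc 1 N ∧
                v ≠ (sq r c : ℕ) ∧ a = LAtom.diff (r : ℕ) (c : ℕ) v}) ∧
    ((∃ M : Set LAtom, IsStableModel (lsProgram N Pre) M) ↔
      ∃ sq : {n : ℕ // n ∈ Finset.Icc 1 N} → {n : ℕ // n ∈ Finset.Icc 1 N} →
          {n : ℕ // n ∈ Finset.Icc 1 N},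
        (∀ r c1 c2, c1 ≠ c2 → sq r c1 ≠ sq r c2) ∧
        (∀ r1 r2 c, r1 ≠ r2 → sq r1 c ≠ sq r2 c) ∧
        (∀ p ∈ Pre, ∀ (hr : p.1 ∈ Finset.Icc 1 N) (hc : p.2.1 ∈ Finset.Icc 1 N),
          (sq ⟨p.1, hr⟩ ⟨p.2.1, hc⟩ : ℕ) = p.2.2)) := by
  simpa only [IsLatinCompletion, lsModel_eq, and_assoc] using
    stmt12_general fun p hp => (hPre p hp).2.2
end
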